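/- arXiv:solv-int/9812001 — 5 statements merged into one kernel-verified Lean document; each statement's English description precedes it below -/
import Mathlib

section
/- Duality between Stäckel systems (Proposition). Fix n ≥ 1 and functions s, s̃ : Fin n → Fin n → ℝ → ℝ with s k j = s̃ k j for every k ≠ 0 (the two data differ in the first row only). For q ∈ ℝⁿ define the Stäckel matrices S(q) and S̃(q) by S(q) k j = s k j (q_j) and S̃(q) k j = s̃ k j (q_j), and suppose det S(q) ≠ 0 and det S̃(q) ≠ 0. Given potentials U_j : ℝ → ℝ, define the Hamiltonians H(p,q) = Σ_j (S(q)⁻¹)_{j 0} · (p_j² + U_j(q_j)) and H̃(p,q) = Σ_j (S̃(q)⁻¹)_{j 0} · (p_j² + U_j(q_j)). Then H̃(p,q) = (det S(q) / det S̃(q)) · H(p,q) for all (p,q) ∈ ℝⁿ × ℝⁿ. -/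
open Matrix

/-- Duality between Stäckel systems: if two Stäckel matrices differ in the first
row only, then the corresponding Stäckel Hamiltonians are proportional, with the
ratio of the determinants as the factor. -/
theorem stackel_duality (n : ℕ) (hn : 1 ≤ n)
    (s s' : Fin n → Fin n → ℝ → ℝ)
    (hrow : ∀ k j : Fin n, k ≠ ⟨0, hn⟩ → s k j = s' k j)
    (U : Fin n → ℝ → ℝ) (p q : Fin n → ℝ)
    (S S' : Matrix (Fin n) (Fin n) ℝ)
    (hS : ∀ k j, S k j = s k j (q j))
    (hS' : ∀ k j, S' k j = s' k j (q j))
    (hdet : S.det ≠ 0) (hdet' : S'.det ≠ 0) :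
    (∑ j, S'⁻¹ j ⟨0, hn⟩ * ((p j) ^ 2 + U j (q j))) =
      (S.det / S'.det) * ∑ j, S⁻¹ j ⟨0, hn⟩ * ((p j) ^ 2 + U j (q j)) := by
  have hadj : ∀ j, S'.adjugate j ⟨0, hn⟩ = S.adjugate j ⟨0, hn⟩ := by
    intro j
    rw [Matrix.adjugate_apply, Matrix.adjugate_apply]
    congr 1
    ext k l
    by_cases hk : k = ⟨0, hn⟩
    · subst hk
      simp
    · rw [Matrix.updateRow_ne hk, Matrix.updateRow_ne hk, hS, hS', hrow k l hk]
  rw [Finset.mul_sum]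
  refine Finset.sum_congr rfl fun j _ => ?_
  rw [Matrix.inv_def, Matrix.inv_def, Matrix.smul_apply, Matrix.smul_apply, hadj j,
    Ring.inverse_eq_inv', smul_eq_mul, smul_eq_mul]
  field_simp
end

section
/- Holt potential from the cubic Stäckel system. Let α ≠ 0, γ, δ ∈ ℝ, x > 0, and define H(q₁,q₂,p₁,p₂) = (1/4)(p₁² + p₂²) + α²(q₁³ + q₂³) + (γ/2)(q₁ + q₂) + δ. The substitution q₁ = (3/4)x^{2/3} + p_y/(3α), q₂ = (3/4)x^{2/3} − p_y/(3α), p₁ = p_x·x^{1/3} − (3α/2)y, p₂ = p_x·x^{1/3} + (3α/2)y is a canonical transformation (it satisfies {p₁,q₁} = {p₂,q₂} = 1 and {p₁,q₂} = {p₂,q₁} = {q₁,q₂} = {p₁,p₂} = 0 with respect to the canonical Poisson bracket in (x,y,p_x,p_y)), and under it x^{−2/3}·H(q₁,q₂,p₁,p₂) = (1/2)(p_x² + p_y²) + (9α²/8)·x^{−2/3}·((3/4)x² + y²) + δ·x^{−2/3} + 3γ/4. -/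
/-- The canonical Poisson bracket of two functions of `(x, y, pₓ, p_y)` on `ℝ⁴`:
`{F,G} = ∂F/∂pₓ·∂G/∂x − ∂F/∂x·∂G/∂pₓ + ∂F/∂p_y·∂G/∂y − ∂F/∂y·∂G/∂p_y`. -/
noncomputable def pb (F G : ℝ → ℝ → ℝ → ℝ → ℝ) (x y px py : ℝ) : ℝ :=
    deriv (fun s => F x y s py) px * deriv (fun s => G s y px py) x
  - deriv (fun s => F s y px py) x * deriv (fun s => G x y s py) px
  + deriv (fun s => F x y px s) py * deriv (fun s => G x s px py) y
  - deriv (fun s => F x s px py) y * deriv (fun s => G x y px s) py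

/-- The separation variables of the Holt system dual to the first Hénon–Heiles
system (here `x ^ ((2:ℝ)/3)` is the real power). -/
noncomputable def q₁ (α : ℝ) : ℝ → ℝ → ℝ → ℝ → ℝ :=
  fun x _ _ py => (3 / 4) * x ^ ((2 : ℝ) / 3) + py / (3 * α)
noncomputable def q₂ (α : ℝ) : ℝ → ℝ → ℝ → ℝ → ℝ :=
  fun x _ _ py => (3 / 4) * x ^ ((2 : ℝ) / 3) - py / (3 * α)
noncomputable def p₁ (α : ℝ) : ℝ → ℝ → ℝ → ℝ → ℝ :=
  fun x y px _ => px * x ^ ((1 : ℝ) / 3) - (3 * α / 2) * y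
noncomputable def p₂ (α : ℝ) : ℝ → ℝ → ℝ → ℝ → ℝ :=
  fun x y px _ => px * x ^ ((1 : ℝ) / 3) + (3 * α / 2) * y

/-- The Stäckel Hamiltonian of the cubic uniform family with `β = 0`. -/
noncomputable def Ham (α γ δ : ℝ) (Q₁ Q₂ P₁ P₂ : ℝ) : ℝ :=
  (1 / 4) * (P₁ ^ 2 + P₂ ^ 2) + α ^ 2 * (Q₁ ^ 3 + Q₂ ^ 3) + (γ / 2) * (Q₁ + Q₂) + δ

theorem aux_pow (x : ℝ) (hx : 0 < x) :
    ∃ u v : ℝ, 0 < u ∧ x = u ^ 3 ∧ x ^ ((1 : ℝ) / 3) = u ∧ x ^ ((2 : ℝ) / 3) = u ^ 2 ∧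
      x ^ (-(2 : ℝ) / 3) = (u ^ 2)⁻¹ ∧
      HasDerivAt (fun s : ℝ => s ^ ((1 : ℝ) / 3)) v x ∧
      HasDerivAt (fun s : ℝ => s ^ ((2 : ℝ) / 3)) (2 / 3 * u⁻¹) x := by
  have h2 : x ^ ((2 : ℝ) / 3) = (x ^ ((1 : ℝ) / 3)) ^ 2 := by
    rw [← Real.rpow_natCast, ← Real.rpow_mul hx.le]; norm_num
  refine ⟨x ^ ((1 : ℝ) / 3), _, Real.rpow_pos_of_pos hx _, ?_, rfl, h2, ?_,
    Real.hasDerivAt_rpow_const (Or.inl hx.ne'), ?_⟩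
  · rw [← Real.rpow_natCast, ← Real.rpow_mul hx.le]; norm_num
  · rw [← h2, ← Real.rpow_neg hx.le]; norm_num
  · have h := Real.hasDerivAt_rpow_const (x := x) (p := (2 : ℝ) / 3) (Or.inl hx.ne')
    rw [← Real.rpow_neg hx.le]
    convert h using 3
    norm_num

theorem aux_lin (a b c : ℝ) : deriv (fun s : ℝ => a + b * s) c = b := by
  simpa using (((hasDerivAt_id c).const_mul b).const_add a).deriv

/-- Holt potential from the cubic Stäckel system: the substitution is canonical on
the half-space `x > 0`, and after the time change (division by `x^(2/3)`) the
Hamiltonian takes the natural Holt form. -/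
theorem holt_from_cubic (α γ δ : ℝ) (hα : α ≠ 0) :
    (∀ x y px py : ℝ, 0 < x → pb (p₁ α) (q₁ α) x y px py = 1) ∧
    (∀ x y px py : ℝ, 0 < x → pb (p₂ α) (q₂ α) x y px py = 1) ∧
    (∀ x y px py : ℝ, 0 < x → pb (p₁ α) (q₂ α) x y px py = 0) ∧
    (∀ x y px py : ℝ, 0 < x → pb (p₂ α) (q₁ α) x y px py = 0) ∧
    (∀ x y px py : ℝ, 0 < x → pb (q₁ α) (q₂ α) x y px py = 0) ∧
    (∀ x y px py : ℝ, 0 < x → pb (p₁ α) (p₂ α) x y px py = 0) ∧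
    (∀ x y px py : ℝ, 0 < x →
      x ^ (-(2 : ℝ) / 3) *
          Ham α γ δ (q₁ α x y px py) (q₂ α x y px py) (p₁ α x y px py) (p₂ α x y px py) =
        (1 / 2) * (px ^ 2 + py ^ 2)
          + (9 * α ^ 2 / 8) * x ^ (-(2 : ℝ) / 3) * ((3 / 4) * x ^ 2 + y ^ 2)
          + δ * x ^ (-(2 : ℝ) / 3) + 3 * γ / 4) := by
  have dq : ∀ (x py u : ℝ), HasDerivAt (fun s : ℝ => s ^ ((2 : ℝ) / 3)) (2 / 3 * u⁻¹) x →
      deriv (fun s : ℝ => 3 / 4 * s ^ ((2 : ℝ) / 3) + py / (3 * α)) x = 1 / 2 * u⁻¹ ∧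
      deriv (fun s : ℝ => 3 / 4 * s ^ ((2 : ℝ) / 3) - py / (3 * α)) x = 1 / 2 * u⁻¹ := by
    intro x py u h
    constructor
    · rw [((h.const_mul (3 / 4)).add_const _).deriv]; ring
    · rw [((h.const_mul (3 / 4)).sub_const _).deriv]; ring
  have dp : ∀ (x y px v : ℝ), HasDerivAt (fun s : ℝ => s ^ ((1 : ℝ) / 3)) v x →
      deriv (fun s : ℝ => px * s ^ ((1 : ℝ) / 3) - 3 * α / 2 * y) x = px * v ∧
      deriv (fun s : ℝ => px * s ^ ((1 : ℝ) / 3) + 3 * α / 2 * y) x = px * v := by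
    intro x y px v h
    exact ⟨((h.const_mul px).sub_const _).deriv, ((h.const_mul px).add_const _).deriv⟩
  have l1 : ∀ a b c : ℝ, deriv (fun s : ℝ => s * a - b) c = a := fun a b c => by
    simpa using (((hasDerivAt_id c).mul_const a).sub_const b).deriv
  have l2 : ∀ a b c : ℝ, deriv (fun s : ℝ => s * a + b) c = a := fun a b c => by
    simpa using (((hasDerivAt_id c).mul_const a).add_const b).deriv
  have l3 : ∀ a b c : ℝ, deriv (fun s : ℝ => a - b * s) c = -b := fun a b c => by
    simpa using (((hasDerivAt_id c).const_mul b).const_sub a).deriv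
  have l4 : ∀ a b c : ℝ, deriv (fun s : ℝ => a + s / b) c = 1 / b := fun a b c => by
    simpa using (((hasDerivAt_id c).div_const b).const_add a).deriv
  have l5 : ∀ a b c : ℝ, deriv (fun s : ℝ => a - s / b) c = -(1 / b) := fun a b c => by
    simpa using (((hasDerivAt_id c).div_const b).const_sub a).deriv
  refine ⟨?_, ?_, ?_, ?_, ?_, ?_, ?_⟩ <;> intro x y px py hx <;>
    obtain ⟨u, v, hu, hxu, e1, e2, e3, h1, h2⟩ := aux_pow x hx <;>
    have hu' := hu.ne'
  iterate 6
    · simp only [pb, p₁, p₂, q₁, q₂, (dq x py u h2).1, (dq x py u h2).2, (dp x y px v h1).1,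
        (dp x y px v h1).2, l1, l2, l3, l4, l5, aux_lin, deriv_const, e1]
      field_simp
      try ring
  · simp only [Ham, p₁, p₂, q₁, q₂, e1, e2, e3]
    rw [hxu]
    field_simp
    ring
end

section
/- Integrable deformation of the Kepler problem. Let β, γ, δ ∈ ℂ, let s, t ∈ ℂ with s·t ≠ 0, and let p_x, p_y ∈ ℂ. Define q₁ = s − t, q₂ = −i(s + t), p₁ = p_x·s − p_y·t, p₂ = i(p_x·s + p_y·t), and H = (1/4)(p₁² + p₂²) + (β/2)(q₁² + q₂²) + (γ/2)(q₁ + q₂) + δ. Then q₁² + q₂² = −4st and 2H/(q₁² + q₂²) = (1/2)p_x·p_y + β + (γ/4)·((1+i)/s − (1−i)/t) − δ/(2st). -/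
open Complex in
/-- Integrable deformation of the Kepler problem: after the complex substitution
`q₁ = s − t`, `q₂ = −i(s+t)`, `p₁ = pₓs − p_y t`, `p₂ = i(pₓs + p_y t)`,
the Stäckel Hamiltonian of the cubic family with `α = 0`, divided by
`(q₁² + q₂²)/2`, takes the form of a deformed Kepler Hamiltonian. -/
theorem kepler_deformation (β γ δ : ℂ) (s t : ℂ) (hst : s * t ≠ 0) (px py : ℂ)
    (q₁ q₂ p₁ p₂ H : ℂ)
    (hq₁ : q₁ = s - t) (hq₂ : q₂ = -I * (s + t))
    (hp₁ : p₁ = px * s - py * t) (hp₂ : p₂ = I * (px * s + py * t))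
    (hH : H = (1 / 4) * (p₁ ^ 2 + p₂ ^ 2) + (β / 2) * (q₁ ^ 2 + q₂ ^ 2)
        + (γ / 2) * (q₁ + q₂) + δ) :
    q₁ ^ 2 + q₂ ^ 2 = -4 * s * t ∧
    2 * H / (q₁ ^ 2 + q₂ ^ 2) =
      (1 / 2) * px * py + β + (γ / 4) * ((1 + I) / s - (1 - I) / t) - δ / (2 * s * t) := by
  have hs : s ≠ 0 := left_ne_zero_of_mul hst
  have ht : t ≠ 0 := right_ne_zero_of_mul hst
  have hI : I ^ 2 = -1 := I_sq
  have h1 : q₁ ^ 2 + q₂ ^ 2 = -4 * s * t := by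
    subst hq₁ hq₂
    linear_combination (s + t) ^ 2 * hI
  have h2 : p₁ ^ 2 + p₂ ^ 2 = -4 * px * py * s * t := by
    subst hp₁ hp₂
    linear_combination (px * s + py * t) ^ 2 * hI
  refine ⟨h1, ?_⟩
  rw [hH, h2, h1, hq₁, hq₂]
  have h4 : -4 * s * t ≠ 0 := mul_ne_zero (mul_ne_zero (by norm_num) hs) ht
  rw [div_eq_iff h4]
  field_simp
  ring
end

section
/- Second integrable Hénon–Heiles system in parabolic coordinates. Let α, β ∈ ℝ, y ≠ 0, r = √(x² + y²), and let q₁ = (x − r)/2, q₂ = (x + r)/2, p₁ = p_x − ((r + x)/y)·p_y, p₂ = p_x + ((r − x)/y)·p_y. With the uniform potential U(q) = α²q³ + β, the Stäckel Hamiltonian in parabolic separation variables equals the Hénon–Heiles Hamiltonian: (q₁·(p₁² + U(q₁)) − q₂·(p₂² + U(q₂)))/(q₁ − q₂) = p_x² + p_y² + α²x³ + (α²/2)·x·y² + β. -/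
/-- Second integrable Hénon–Heiles system in parabolic coordinates: with the
uniform potential `U(q) = α²q³ + β`, the Stäckel Hamiltonian in parabolic
separation variables equals the Hénon–Heiles Hamiltonian. -/
theorem henon_heiles_second_parabolic (α β x y px py : ℝ) (hy : y ≠ 0)
    (r q₁ q₂ p₁ p₂ : ℝ) (U : ℝ → ℝ)
    (hr : r = Real.sqrt (x ^ 2 + y ^ 2))
    (hq₁ : q₁ = (x - r) / 2) (hq₂ : q₂ = (x + r) / 2)
    (hp₁ : p₁ = px - ((r + x) / y) * py) (hp₂ : p₂ = px + ((r - x) / y) * py)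
    (hU : ∀ q, U q = α ^ 2 * q ^ 3 + β) :
    (q₁ * (p₁ ^ 2 + U q₁) - q₂ * (p₂ ^ 2 + U q₂)) / (q₁ - q₂) =
      px ^ 2 + py ^ 2 + α ^ 2 * x ^ 3 + (α ^ 2 / 2) * x * y ^ 2 + β := by
  have hpos : 0 < x ^ 2 + y ^ 2 := by positivity
  have hr0 : r ≠ 0 := by rw [hr]; exact (Real.sqrt_pos.mpr hpos).ne'
  have h2 : r ^ 2 = x ^ 2 + y ^ 2 := by rw [hr]; exact Real.sq_sqrt hpos.le
  obtain ⟨a, ha⟩ : ∃ a, a = (r + x) / y := ⟨_, rfl⟩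
  obtain ⟨b, hb⟩ : ∃ b, b = (r - x) / y := ⟨_, rfl⟩
  have hay : a * y = r + x := by rw [ha]; field_simp
  have hby : b * y = r - x := by rw [hb]; field_simp
  have hab : a * b = 1 := by
    rw [ha, hb]; field_simp; linear_combination h2
  have hd : q₁ - q₂ ≠ 0 := by
    have : q₁ - q₂ = -r := by rw [hq₁, hq₂]; ring
    rw [this]; exact neg_ne_zero.mpr hr0
  rw [← ha] at hp₁
  rw [← hb] at hp₂
  have hq1 : q₁ = -(b * y) / 2 := by rw [hby, hq₁]; ring
  have hq2 : q₂ = a * y / 2 := by rw [hay, hq₂]; ring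
  have hx : x = (a - b) * y / 2 := by linear_combination (hby - hay) / 2
  rw [div_eq_iff hd, hU, hU, hp₁, hp₂, hq1, hq2, hx]
  clear hx hq1 hq2 hp₁ hp₂ hay hby ha hb h2 hr hq₁ hq₂ hd
  grind
end

section
/- Linear r-matrix algebra for the parabolic Lax matrix. Define h(λ) = p_x + y·p_y/(2λ), e(λ) = λ − x − y²/(4λ), f(λ) = p_y²/λ. Then for all λ, μ with λ ≠ 0, μ ≠ 0, λ ≠ μ, the following Poisson bracket relations hold: {e(λ), e(μ)} = 0, {h(λ), h(μ)} = 0, {f(λ), f(μ)} = 0, {h(λ), e(μ)} = (e(μ) − e(λ))/(λ − μ), {h(λ), f(μ)} = (f(λ) − f(μ))/(λ − μ), and {e(λ), f(μ)} = 2·(h(μ) − h(λ))/(λ − μ). -/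
/-- Entries of the Lax matrix of the free Stäckel system separable in parabolic
coordinates, with spectral parameter `lam`. -/
noncomputable def hP (lam : ℝ) : ℝ → ℝ → ℝ → ℝ → ℝ :=
  fun _ y px py => px + y * py / (2 * lam)
noncomputable def eP (lam : ℝ) : ℝ → ℝ → ℝ → ℝ → ℝ :=
  fun x y _ _ => lam - x - y ^ 2 / (4 * lam)
noncomputable def fP (lam : ℝ) : ℝ → ℝ → ℝ → ℝ → ℝ :=
  fun _ _ _ py => py ^ 2 / lam

/-- Linear r-matrix algebra for the parabolic Lax matrix: the entrywise form of
`{L₁(λ), L₂(μ)} = [r₁₂(λ,μ), L₁(λ)] − [r₂₁(λ,μ), L₂(μ)]` with the standard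
rational r-matrix on the loop algebra of `sl(2)`. -/
theorem r_matrix_parabolic :
    ∀ (lam mu x y px py : ℝ), lam ≠ 0 → mu ≠ 0 → lam ≠ mu →
      pb (eP lam) (eP mu) x y px py = 0 ∧
      pb (hP lam) (hP mu) x y px py = 0 ∧
      pb (fP lam) (fP mu) x y px py = 0 ∧
      pb (hP lam) (eP mu) x y px py =
        (eP mu x y px py - eP lam x y px py) / (lam - mu) ∧
      pb (hP lam) (fP mu) x y px py =
        (fP lam x y px py - fP mu x y px py) / (lam - mu) ∧
      pb (eP lam) (fP mu) x y px py =
        2 * (hP mu x y px py - hP lam x y px py) / (lam - mu) := by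
  intro lam mu x y px py hl hm hlm
  have hd : lam - mu ≠ 0 := sub_ne_zero.mpr hlm
  have h1 : ∀ c : ℝ, deriv (fun s : ℝ => s + c) px = 1 := fun c =>
    ((hasDerivAt_id px).add_const c).deriv
  have h2 : ∀ c l : ℝ, deriv (fun s : ℝ => c + s * py / l) y = py / l := fun c l => by
    simpa using ((((hasDerivAt_id y).mul_const py).div_const l).const_add c).deriv
  have h3 : ∀ c l : ℝ, deriv (fun s : ℝ => c + y * s / l) py = y / l := fun c l => by
    simpa using ((((hasDerivAt_id py).const_mul y).div_const l).const_add c).deriv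
  have e1 : ∀ c l : ℝ, deriv (fun s : ℝ => l - s - c) x = -1 := fun c l =>
    (((hasDerivAt_id x).const_sub l).sub_const c).deriv
  have e2 : ∀ c l : ℝ, deriv (fun s : ℝ => c - s ^ 2 / l) y = -(2 * y / l) := fun c l => by
    simpa using (((hasDerivAt_pow 2 y).div_const l).const_sub c).deriv
  have f1 : ∀ l : ℝ, deriv (fun s : ℝ => s ^ 2 / l) py = 2 * py / l := fun l => by
    simpa using ((hasDerivAt_pow 2 py).div_const l).deriv
  simp only [pb, hP, eP, fP, h1, h2, h3, e1, e2, f1, deriv_const]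
  refine ⟨?_, ?_, ?_, ?_, ?_, ?_⟩ <;> field_simp <;> ring
end
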